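/- The set of codes of pairs (R, t), where R is a finite term rewriting system over a finite signature and t is a ground term over that signature such that R is weakly confluent on t, is Σ⁰₁-complete. -/

import Mathlib

/-!
Membership in Σ⁰₁. The coding of terms is a bijection between `Term` and `ℕ`, and structural recursion
on terms is primitive recursive (`primrec_fold`), since it is course-of-values recursion on codes. Hence
well-formedness and groundness are primitive recursive predicates. A matching substitution takes
subterms of the matched term as values, so the one-step reducts of a term form a computable finite list
(`primrec_reducts`, `mem_reducts`). Therefore `R` is weakly confluent on `t` iff for some `k` all pairs of
one-step reducts of `t` are joinable within `k` steps (`wcrOn_iff`), and unbounded search for `k` shows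
that the set is recursively enumerable (`sigma01_wcr`).

Hardness. `Interp.rules` is a fixed rewriting system interpreting the programs
`Turing.ToPartrec.Code`, on configurations `ev(c, k, v)` (run code `c` on list `v`, then pass the
result to the continuation `k`) and `ret(k, v)`, with `ret(halt, v) → a`. Two rules `go → a` and `go → s`
are added, where `s = ev(c, halt, [n])`. As `a` is a normal form, weak confluence on `go` means `s →* a`
(`Interp.wcr_iff`). That in turn holds iff `c` halts on `[n]` (`Interp.reduces_a_iff`). If `c` halts, the
reduction is constructed by induction on `c` (`Interp.ev_reduces`). Conversely, every term gets a
denotation as a code, continuation, number and list, which rewriting preserves at any position,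
and the property that the denoted evaluation halts pulls back along rewrite steps
(`Interp.rewrite_sound`). Since the codes compute all partial recursive functions and
`n ↦ (sig, R, go)` is primitive recursive, every recursively enumerable set reduces to the given set
(`Interp.manyOneRed_wcr`).
-/

/-- First-order terms over the fixed countably infinite set of variables
(named by naturals): a term is a variable or a function symbol (named by a
natural number) applied to a list of argument terms. -/
inductive Term : Type
  | var : ℕ → Term
  | app : ℕ → List Term → Term

namespace Term

/-- Homomorphic application of a substitution (a map from variables to terms). -/
def subst (σ : ℕ → Term) : Term → Term
  | var n => σ n
  | app f ts => app f (ts.attach.map (fun x => subst σ x.1))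
decreasing_by
  have := List.sizeOf_lt_of_mem x.2
  simp only [Term.app.sizeOf_spec]; omega

/-- An injective encoding of terms into the natural numbers. -/
def encode : Term → ℕ
  | var n => Nat.pair 0 n
  | app f ts => Nat.pair (f + 1) (Encodable.encode (ts.attach.map (fun x => encode x.1)))
decreasing_by
  have := List.sizeOf_lt_of_mem x.2
  simp only [Term.app.sizeOf_spec]; omega

end Term

/-- `IsVarOf n t` holds iff the variable `n` occurs in the term `t`. -/
inductive IsVarOf (n : ℕ) : Term → Prop
  | var : IsVarOf n (.var n)
  | app {f : ℕ} {ts : List Term} {t : Term} : t ∈ ts → IsVarOf n t → IsVarOf n (.app f ts)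

/-- A term is ground if no variable occurs in it. -/
def Ground (t : Term) : Prop := ∀ n : ℕ, ¬ IsVarOf n t

/-- A (finite) signature is presented by a finite list of pairs
(function symbol, arity); `WFSig` states that each symbol has a unique arity. -/
def WFSig (sig : List (ℕ × ℕ)) : Prop :=
  ∀ p ∈ sig, ∀ q ∈ sig, p.1 = q.1 → p.2 = q.2

/-- `WFTerm sig t`: `t` is a term over the signature `sig`, i.e. every function
symbol occurring in `t` belongs to `sig` and is applied to the correct number
of arguments. -/
inductive WFTerm (sig : List (ℕ × ℕ)) : Term → Prop
  | var (n : ℕ) : WFTerm sig (.var n)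
  | app {f : ℕ} {ts : List Term} : (f, ts.length) ∈ sig →
      (∀ t ∈ ts, WFTerm sig t) → WFTerm sig (.app f ts)

/-- `WFTRS sig R`: the finite list of rules `R` is a term rewriting system over
the signature `sig`: `sig` assigns unique arities, both sides of every rule are
terms over `sig`, no left-hand side is a variable, and every variable occurring
in a right-hand side occurs in the corresponding left-hand side. -/
def WFTRS (sig : List (ℕ × ℕ)) (R : List (Term × Term)) : Prop :=
  WFSig sig ∧ ∀ p ∈ R, WFTerm sig p.1 ∧ WFTerm sig p.2 ∧
    (∀ n : ℕ, p.1 ≠ .var n) ∧ (∀ n : ℕ, IsVarOf n p.2 → IsVarOf n p.1)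

/-- The one-step rewrite relation `→_R` of a TRS `R`: application of a rule
under a substitution, closed under arbitrary one-hole contexts (i.e. embedded
at any argument position at any depth). -/
inductive Rewrite (R : List (Term × Term)) : Term → Term → Prop
  | rule (l r : Term) (σ : ℕ → Term) (h : (l, r) ∈ R) :
      Rewrite R (l.subst σ) (r.subst σ)
  | congr (f : ℕ) (ts₁ ts₂ : List Term) (t t' : Term) (h : Rewrite R t t') :
      Rewrite R (.app f (ts₁ ++ t :: ts₂)) (.app f (ts₁ ++ t' :: ts₂))

/-- Many-step rewriting `→*_R` (reflexive-transitive closure of `→_R`). -/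
def Reduces (R : List (Term × Term)) : Term → Term → Prop :=
  Relation.ReflTransGen (Rewrite R)

/-- `t` is a normal form of `R` (admits no `→_R`-step). -/
def NormalForm (R : List (Term × Term)) (t : Term) : Prop := ∀ u : Term, ¬ Rewrite R t u

/-- `R` is strongly normalizing (terminating) on `t`:
no infinite rewrite sequence starts at `t`. -/
def SNon (R : List (Term × Term)) (t : Term) : Prop :=
  ¬ ∃ f : ℕ → Term, f 0 = t ∧ ∀ n : ℕ, Rewrite R (f n) (f (n + 1))

/-- `R` is weakly normalizing on `t`: some reduction from `t` ends in a normal form. -/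
def WNon (R : List (Term × Term)) (t : Term) : Prop :=
  ∃ s : Term, Reduces R t s ∧ NormalForm R s

/-- `R` is confluent (Church-Rosser) on `t`. -/
def CRon (R : List (Term × Term)) (t : Term) : Prop :=
  ∀ t₁ t₂ : Term, Reduces R t t₁ → Reduces R t t₂ →
    ∃ d : Term, Reduces R t₁ d ∧ Reduces R t₂ d

/-- `R` is weakly confluent (weakly Church-Rosser) on `t`. -/
def WCRon (R : List (Term × Term)) (t : Term) : Prop :=
  ∀ t₁ t₂ : Term, Rewrite R t t₁ → Rewrite R t t₂ →
    ∃ d : Term, Reduces R t₁ d ∧ Reduces R t₂ d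

/-- A root step `s →_{R,ε} t`: `s = ℓσ` and `t = rσ` for some rule `ℓ → r` of `R`. -/
def RootStep (R : List (Term × Term)) (s t : Term) : Prop :=
  ∃ (l r : Term) (σ : ℕ → Term), (l, r) ∈ R ∧ s = l.subst σ ∧ t = r.subst σ

/-- Code of a rewrite rule. -/
def encodeRule (p : Term × Term) : ℕ := Nat.pair p.1.encode p.2.encode

/-- Code of a finite TRS. -/
def encodeTRS (R : List (Term × Term)) : ℕ := Encodable.encode (R.map encodeRule)

/-- Code of a finite signature. -/
def encodeSig (sig : List (ℕ × ℕ)) : ℕ := Encodable.encode sig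

/-- A set `A ⊆ ℕ` is Σ⁰₁ (recursively enumerable) if it is the domain of a
partial computable function. -/
def Sigma01 (A : Set ℕ) : Prop :=
  ∃ f : ℕ →. ℕ, Nat.Partrec f ∧ ∀ n : ℕ, n ∈ A ↔ (f n).Dom

/-- `B` is many-one reducible to `A`: there is a total computable `g` with
`n ∈ B ↔ g n ∈ A` for all `n`. -/
def ManyOneRed (B A : Set ℕ) : Prop :=
  ∃ g : ℕ → ℕ, Computable g ∧ ∀ n : ℕ, n ∈ B ↔ g n ∈ A

/-- `A` is Σ⁰₁-complete. -/
def Sigma01Complete (A : Set ℕ) : Prop :=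
  Sigma01 A ∧ ∀ B : Set ℕ, Sigma01 B → ManyOneRed B A

/-- A set `A ⊆ ℕ` is Π⁰₂ if there is a decidable (computable) predicate
`P ⊆ ℕ³` with `n ∈ A ↔ ∀ x ∃ y, P n x y`. -/
def Pi02 (A : Set ℕ) : Prop :=
  ∃ p : ℕ → ℕ → ℕ → Bool,
    Computable (fun x : ℕ × ℕ × ℕ => p x.1 x.2.1 x.2.2) ∧
    ∀ n : ℕ, n ∈ A ↔ ∀ x : ℕ, ∃ y : ℕ, p n x y = true

/-- `A` is Π⁰₂-complete. -/
def Pi02Complete (A : Set ℕ) : Prop :=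
  Pi02 A ∧ ∀ B : Set ℕ, Pi02 B → ManyOneRed B A

/-- A set `A ⊆ ℕ` is Π¹₁ if there is a decidable (computable) predicate
`P ⊆ ℕ²` such that `n ∈ A` iff for every function `α : ℕ → ℕ` there exists
`k` with `P n ⟨α 0, …, α (k-1)⟩`, where `⟨·⟩` is the (computable) coding of
finite sequences of naturals. -/
def Pi11 (A : Set ℕ) : Prop :=
  ∃ p : ℕ → ℕ → Bool,
    Computable (fun x : ℕ × ℕ => p x.1 x.2) ∧
    ∀ n : ℕ, n ∈ A ↔ ∀ α : ℕ → ℕ, ∃ k : ℕ,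
      p n (Encodable.encode (List.ofFn (fun i : Fin k => α i))) = true

/-- `A` is Π¹₁-complete. -/
def Pi11Complete (A : Set ℕ) : Prop :=
  Pi11 A ∧ ∀ B : Set ℕ, Pi11 B → ManyOneRed B A

/-! ### Basic facts about terms -/

/-- Structural induction on terms, with the hypothesis for all arguments. -/
theorem Term.ind {P : Term → Prop} (hv : ∀ n, P (.var n))
    (ha : ∀ f ts, (∀ t ∈ ts, P t) → P (.app f ts)) : ∀ t, P t
  | .var n => hv n
  | .app f ts => ha f ts (fun t _ => Term.ind hv ha t)
decreasing_by
  have := List.sizeOf_lt_of_mem ‹t ∈ ts›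
  simp only [Term.app.sizeOf_spec]; omega

@[simp] theorem Term.subst_var (σ : ℕ → Term) (n : ℕ) : (Term.var n).subst σ = σ n := by
  rw [Term.subst]

@[simp] theorem Term.subst_app (σ : ℕ → Term) (f : ℕ) (ts : List Term) :
    (Term.app f ts).subst σ = .app f (ts.map (Term.subst σ)) := by
  rw [Term.subst, List.attach_map_val]

@[simp] theorem Term.encode_app (f : ℕ) (ts : List Term) :
    (Term.app f ts).encode = Nat.pair (f + 1) (Encodable.encode (ts.map Term.encode)) := by
  rw [Term.encode, List.attach_map_val]

@[simp] theorem Term.encode_var (n : ℕ) : (Term.var n).encode = Nat.pair 0 n := by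
  rw [Term.encode]

@[simp] theorem isVarOf_var {n m : ℕ} : IsVarOf n (.var m) ↔ n = m :=
  ⟨fun h => by cases h; rfl, fun h => h ▸ .var⟩

@[simp] theorem isVarOf_app {n f : ℕ} {ts : List Term} :
    IsVarOf n (.app f ts) ↔ ∃ t ∈ ts, IsVarOf n t :=
  ⟨fun h => by cases h with | app h₁ h₂ => exact ⟨_, h₁, h₂⟩, fun ⟨_, h₁, h₂⟩ => .app h₁ h₂⟩

@[simp] theorem wfTerm_var {sig : List (ℕ × ℕ)} {n : ℕ} : WFTerm sig (.var n) := .var n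

@[simp] theorem wfTerm_app {sig : List (ℕ × ℕ)} {f : ℕ} {ts : List Term} :
    WFTerm sig (.app f ts) ↔ (f, ts.length) ∈ sig ∧ ∀ t ∈ ts, WFTerm sig t :=
  ⟨fun h => by cases h with | app h₁ h₂ => exact ⟨h₁, h₂⟩, fun ⟨h₁, h₂⟩ => .app h₁ h₂⟩

theorem Term.subst_congr {σ τ : ℕ → Term} (t : Term) (h : ∀ n, IsVarOf n t → σ n = τ n) :
    t.subst σ = t.subst τ := by
  induction t using Term.ind with
  | hv n => simpa using h
  | ha f ts ih =>
    simp only [Term.subst_app, Term.app.injEq, true_and]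
    exact List.map_congr_left fun t ht => ih t ht fun n hn => h n (.app ht hn)

theorem Term.subst_ground {σ : ℕ → Term} {t : Term} (h : Ground t) : t.subst σ = t := by
  induction t using Term.ind with
  | hv n => exact absurd .var (h n)
  | ha f ts ih =>
    simp only [Term.subst_app, Term.app.injEq, true_and]
    conv_rhs => rw [← List.map_id ts]
    exact List.map_congr_left fun t ht => ih t ht fun n hn => h n (.app ht hn)

/-! ### The interpreter rewriting system -/

namespace Interp

open Turing.ToPartrec

/-- The result constant `a`. -/
def tA : Term := .app 0 []
/-- The start constant `go`. -/
def tGo : Term := .app 1 []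
/-- Evaluate the code `c` on the list `v`, then continue with `k`. -/
def tEv (c k v : Term) : Term := .app 2 [c, k, v]
/-- Pass the list `v` to the continuation `k`. -/
def tRet (k v : Term) : Term := .app 3 [k, v]
/-- The code `zero'`. -/
def cZero : Term := .app 4 []
/-- The code `succ`. -/
def cSucc : Term := .app 5 []
/-- The code `tail`. -/
def cTail : Term := .app 6 []
/-- The code `cons f g`. -/
def cCons (f g : Term) : Term := .app 7 [f, g]
/-- The code `comp f g`. -/
def cComp (f g : Term) : Term := .app 8 [f, g]
/-- The code `case f g`. -/
def cCase (f g : Term) : Term := .app 9 [f, g]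
/-- The code `fix f`. -/
def cFix (f : Term) : Term := .app 10 [f]
/-- The continuation `halt`. -/
def kHalt : Term := .app 11 []
/-- The continuation `cons₁ f v k`. -/
def kCons₁ (f v k : Term) : Term := .app 12 [f, v, k]
/-- The continuation `cons₂ v k`. -/
def kCons₂ (v k : Term) : Term := .app 13 [v, k]
/-- The continuation `comp f k`. -/
def kComp (f k : Term) : Term := .app 14 [f, k]
/-- The continuation `fix f k`. -/
def kFix (f k : Term) : Term := .app 15 [f, k]
/-- The number zero. -/
def nZ : Term := .app 16 []
/-- The successor of a number. -/
def nS (x : Term) : Term := .app 17 [x]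
/-- The empty list. -/
def lNil : Term := .app 18 []
/-- The list with head `x` and tail `v`. -/
def lCons (x v : Term) : Term := .app 19 [x, v]

/-- The signature of the interpreter. -/
def sig : List (ℕ × ℕ) :=
  [(0, 0), (1, 0), (2, 3), (3, 2), (4, 0), (5, 0), (6, 0), (7, 2), (8, 2), (9, 2), (10, 1),
   (11, 0), (12, 3), (13, 2), (14, 2), (15, 2), (16, 0), (17, 1), (18, 0), (19, 2)]

local notation "x₀" => Term.var 0
local notation "x₁" => Term.var 1
local notation "x₂" => Term.var 2
local notation "x₃" => Term.var 3

/-- The rules of the interpreter, following the clauses of `Turing.ToPartrec.stepNormal` and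
`Turing.ToPartrec.stepRet`. -/
def rules : List (Term × Term) :=
  [(tEv cZero x₀ x₁, tRet x₀ (lCons nZ x₁)),
   (tEv cSucc x₀ lNil, tRet x₀ (lCons (nS nZ) lNil)),
   (tEv cSucc x₀ (lCons x₁ x₂), tRet x₀ (lCons (nS x₁) lNil)),
   (tEv cTail x₀ lNil, tRet x₀ lNil),
   (tEv cTail x₀ (lCons x₁ x₂), tRet x₀ x₂),
   (tEv (cCons x₀ x₁) x₂ x₃, tEv x₀ (kCons₁ x₁ x₃ x₂) x₃),
   (tEv (cComp x₀ x₁) x₂ x₃, tEv x₁ (kComp x₀ x₂) x₃),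
   (tEv (cCase x₀ x₁) x₂ lNil, tEv x₀ x₂ lNil),
   (tEv (cCase x₀ x₁) x₂ (lCons nZ x₃), tEv x₀ x₂ x₃),
   (tEv (cCase x₀ x₁) x₂ (lCons (nS (.var 4)) x₃), tEv x₁ x₂ (lCons (.var 4) x₃)),
   (tEv (cFix x₀) x₁ x₂, tEv x₀ (kFix x₀ x₁) x₂),
   (tRet kHalt x₀, tA),
   (tRet (kCons₁ x₀ x₁ x₂) x₃, tEv x₀ (kCons₂ x₃ x₂) x₁),
   (tRet (kCons₂ lNil x₀) x₁, tRet x₀ (lCons nZ x₁)),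
   (tRet (kCons₂ (lCons x₀ x₁) x₂) x₃, tRet x₂ (lCons x₀ x₃)),
   (tRet (kComp x₀ x₁) x₂, tEv x₀ x₁ x₂),
   (tRet (kFix x₀ x₁) lNil, tRet x₁ lNil),
   (tRet (kFix x₀ x₁) (lCons nZ x₂), tRet x₁ x₂),
   (tRet (kFix x₀ x₁) (lCons (nS x₂) x₃), tEv x₀ (kFix x₀ x₁) x₃)]

/-- The interpreter together with the rules `go → a` and `go → s`. -/
def R (s : Term) : List (Term × Term) := (tGo, tA) :: (tGo, s) :: rules

/-- The term for a number. -/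
def encN : ℕ → Term
  | 0 => nZ
  | n + 1 => nS (encN n)

/-- The term for a list of numbers. -/
def encL : List ℕ → Term
  | [] => lNil
  | n :: v => lCons (encN n) (encL v)

/-- The term for a code. -/
def encC : Code → Term
  | .zero' => cZero
  | .succ => cSucc
  | .tail => cTail
  | .cons f g => cCons (encC f) (encC g)
  | .comp f g => cComp (encC f) (encC g)
  | .case f g => cCase (encC f) (encC g)
  | .fix f => cFix (encC f)

theorem red_trans {R : List (Term × Term)} {s t u : Term} (h₁ : Reduces R s t)
    (h₂ : Reduces R t u) : Reduces R s u :=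
  Relation.ReflTransGen.trans h₁ h₂

/-- A rule step, with the matching substitution given by a list of terms. -/
theorem rw_rule {s : Term} (l r : Term) (v : List Term) (h : (l, r) ∈ rules) :
    Reduces (R s) (l.subst fun n => v.getD n tA) (r.subst fun n => v.getD n tA) :=
  .single (.rule l r _ (by simp [R, h]))

theorem headI_rule {s k : Term} (v w : List ℕ) :
    Reduces (R s) (tRet (kCons₂ (encL v) k) (encL w)) (tRet k (encL (v.headI :: w))) := by
  cases v with
  | nil =>
    simpa [tRet, kCons₂, lNil, lCons, nZ, encL, encN] using
      rw_rule (s := s) (tRet (kCons₂ lNil x₀) x₁) (tRet x₀ (lCons nZ x₁)) [k, encL w]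
        (by simp [rules])
  | cons n v =>
    simpa [tRet, kCons₂, lNil, lCons, nZ, encL, encN] using
      rw_rule (s := s) (tRet (kCons₂ (lCons x₀ x₁) x₂) x₃) (tRet x₂ (lCons x₀ x₃))
        [encN n, encL v, k, encL w] (by simp [rules])

/-- Completeness of the interpreter: a terminating evaluation of a code is simulated by
rewriting. -/
theorem ev_reduces {s : Term} (c : Code) : ∀ (v w : List ℕ) (k : Term), w ∈ c.eval v →
    Reduces (R s) (tEv (encC c) k (encL v)) (tRet k (encL w)) := by
  induction c with
  | zero' =>
    intro v w k h
    obtain rfl : w = 0 :: v := by simpa using h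
    simpa [encC, encL, encN, tEv, tRet, cZero, lCons, nZ] using
      rw_rule (s := s) (tEv cZero x₀ x₁) (tRet x₀ (lCons nZ x₁)) [k, encL v] (by simp [rules])
  | succ =>
    intro v w k h
    obtain rfl : w = [v.headI.succ] := by simpa using h
    cases v with
    | nil =>
      simpa [encC, encL, encN, tEv, tRet, cSucc, lCons, lNil, nS, nZ] using
        rw_rule (s := s) (tEv cSucc x₀ lNil) (tRet x₀ (lCons (nS nZ) lNil)) [k] (by simp [rules])
    | cons n v =>
      simpa [encC, encL, encN, tEv, tRet, cSucc, lCons, lNil, nS, nZ] using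
        rw_rule (s := s) (tEv cSucc x₀ (lCons x₁ x₂)) (tRet x₀ (lCons (nS x₁) lNil))
          [k, encN n, encL v] (by simp [rules])
  | tail =>
    intro v w k h
    obtain rfl : w = v.tail := by simpa using h
    cases v with
    | nil =>
      simpa [encC, encL, encN, tEv, tRet, cTail, lCons, lNil, nS, nZ] using
        rw_rule (s := s) (tEv cTail x₀ lNil) (tRet x₀ lNil) [k] (by simp [rules])
    | cons n v =>
      simpa [encC, encL, encN, tEv, tRet, cTail, lCons, lNil, nS, nZ] using
        rw_rule (s := s) (tEv cTail x₀ (lCons x₁ x₂)) (tRet x₀ x₂)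
          [k, encN n, encL v] (by simp [rules])
  | cons f g ihf ihg =>
    intro v w k h
    obtain ⟨a, ha, b, hb, rfl⟩ : ∃ a ∈ f.eval v, ∃ b ∈ g.eval v, w = a.headI :: b := by
      simpa using h
    have h₁ : Reduces (R s) (tEv (encC (.cons f g)) k (encL v))
        (tEv (encC f) (kCons₁ (encC g) (encL v) k) (encL v)) := by
      simpa [encC, tEv, cCons, kCons₁] using
        rw_rule (s := s) (tEv (cCons x₀ x₁) x₂ x₃) (tEv x₀ (kCons₁ x₁ x₃ x₂) x₃)
          [encC f, encC g, k, encL v] (by simp [rules])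
    have h₂ : Reduces (R s) (tRet (kCons₁ (encC g) (encL v) k) (encL a))
        (tEv (encC g) (kCons₂ (encL a) k) (encL v)) := by
      simpa [encC, tEv, tRet, kCons₂, kCons₁] using
        rw_rule (s := s) (tRet (kCons₁ x₀ x₁ x₂) x₃) (tEv x₀ (kCons₂ x₃ x₂) x₁)
          [encC g, encL v, k, encL a] (by simp [rules])
    exact red_trans (red_trans (red_trans h₁ (ihf v a _ ha)) h₂)
      (red_trans (ihg v b _ hb) (headI_rule a b))
  | comp f g ihf ihg =>
    intro v w k h
    obtain ⟨a, ha, hb⟩ : ∃ a ∈ g.eval v, w ∈ f.eval a := by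
      rw [Code.comp_eval] at h
      exact Part.mem_bind_iff.1 h
    have h₁ : Reduces (R s) (tEv (encC (.comp f g)) k (encL v))
        (tEv (encC g) (kComp (encC f) k) (encL v)) := by
      simpa [encC, tEv, cComp, kComp] using
        rw_rule (s := s) (tEv (cComp x₀ x₁) x₂ x₃) (tEv x₁ (kComp x₀ x₂) x₃)
          [encC f, encC g, k, encL v] (by simp [rules])
    have h₂ : Reduces (R s) (tRet (kComp (encC f) k) (encL a)) (tEv (encC f) k (encL a)) := by
      simpa [encC, tEv, tRet, kComp] using
        rw_rule (s := s) (tRet (kComp x₀ x₁) x₂) (tEv x₀ x₁ x₂)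
          [encC f, k, encL a] (by simp [rules])
    exact red_trans (red_trans h₁ (ihg v a _ ha)) (red_trans h₂ (ihf a w _ hb))
  | case f g ihf ihg =>
    intro v w k h
    match v with
    | [] =>
      refine red_trans ?_ (ihf [] w k (by simpa using h))
      simpa [encC, encL, tEv, cCase, lNil] using
        rw_rule (s := s) (tEv (cCase x₀ x₁) x₂ lNil) (tEv x₀ x₂ lNil)
          [encC f, encC g, k] (by simp [rules])
    | 0 :: v =>
      refine red_trans ?_ (ihf v w k (by simpa using h))
      simpa [encC, encL, encN, tEv, cCase, lCons, nZ] using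
        rw_rule (s := s) (tEv (cCase x₀ x₁) x₂ (lCons nZ x₃)) (tEv x₀ x₂ x₃)
          [encC f, encC g, k, encL v] (by simp [rules])
    | (n + 1) :: v =>
      refine red_trans ?_ (ihg (n :: v) w k (by simpa using h))
      simpa [encC, encL, encN, tEv, cCase, lCons, nS] using
        rw_rule (s := s) (tEv (cCase x₀ x₁) x₂ (lCons (nS (.var 4)) x₃))
          (tEv x₁ x₂ (lCons (.var 4) x₃)) [encC f, encC g, k, encL v, encN n] (by simp [rules])
  | fix f ih =>
    intro v w k h
    have h₁ (v) : Reduces (R s) (tEv (encC (.fix f)) k (encL v))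
        (tEv (encC f) (kFix (encC f) k) (encL v)) := by
      simpa [encC, tEv, cFix, kFix] using
        rw_rule (s := s) (tEv (cFix x₀) x₁ x₂) (tEv x₀ (kFix x₀ x₁) x₂)
          [encC f, k, encL v] (by simp [rules])
    refine red_trans (h₁ v) ?_
    rw [Code.fix_eval] at h
    refine PFun.fixInduction' (C := fun v => Reduces (R s)
      (tEv (encC f) (kFix (encC f) k) (encL v)) (tRet k (encL w))) h ?_ ?_
    · intro v hv
      obtain ⟨a, ha, hb⟩ := (Part.mem_map_iff _).1 hv
      refine red_trans (ih v a _ ha) ?_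
      match a with
      | [] =>
        obtain rfl : w = [] := by simpa using hb.symm
        simpa [encC, encL, encN, tRet, kFix, lNil] using
          rw_rule (s := s) (tRet (kFix x₀ x₁) lNil) (tRet x₁ lNil) [encC f, k] (by simp [rules])
      | 0 :: a =>
        obtain rfl : w = a := by simpa using hb.symm
        simpa [encC, encL, encN, tRet, kFix, lCons, nZ] using
          rw_rule (s := s) (tRet (kFix x₀ x₁) (lCons nZ x₂)) (tRet x₁ x₂)
            [encC f, k, encL w] (by simp [rules])
      | (n + 1) :: a => simp at hb
    · intro v v' hv' hv ihv
      obtain ⟨a, ha, hb⟩ := (Part.mem_map_iff _).1 hv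
      refine red_trans (ih v a _ ha) (red_trans ?_ ihv)
      match a with
      | [] => simp at hb
      | 0 :: a => simp at hb
      | (n + 1) :: a =>
        obtain rfl : v' = a := by simpa using hb.symm
        simpa [encC, encL, encN, tRet, tEv, kFix, lCons, nS] using
          rw_rule (s := s) (tRet (kFix x₀ x₁) (lCons (nS x₂) x₃)) (tEv x₀ (kFix x₀ x₁) x₃)
            [encC f, k, encN n, encL v'] (by simp [rules])

/-- The denotation of a term: what it stands for if read as a code, as a continuation, as a
number and as a list of numbers, with default values for terms not of the respective kind. -/
structure Den where
  /-- The code denoted by a term. -/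
  code : Code := .zero'
  /-- The continuation denoted by a term. -/
  cont : Cont := .halt
  /-- The number denoted by a term. -/
  num : ℕ := 0
  /-- The list denoted by a term. -/
  list : List ℕ := []

/-- The action of a function symbol on denotations. -/
def denApp : ℕ → List Den → Den
  | 5, [] => { code := .succ }
  | 6, [] => { code := .tail }
  | 7, [x, y] => { code := .cons x.code y.code }
  | 8, [x, y] => { code := .comp x.code y.code }
  | 9, [x, y] => { code := .case x.code y.code }
  | 10, [x] => { code := .fix x.code }
  | 12, [x, y, z] => { cont := .cons₁ x.code y.list z.cont }
  | 13, [x, y] => { cont := .cons₂ x.list y.cont }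
  | 14, [x, y] => { cont := .comp x.code y.cont }
  | 15, [x, y] => { cont := .fix x.code y.cont }
  | 17, [x] => { num := x.num + 1 }
  | 19, [x, y] => { list := x.num :: y.list }
  | _, _ => {}

/-- The denotation of a term. -/
def den : Term → Den
  | .var _ => {}
  | .app f ts => denApp f (ts.map den)

/-- The halting condition attached to a function symbol with given argument denotations. -/
def haltsApp : ℕ → List Den → Prop
  | 2, [c, k, v] => ∃ w ∈ c.code.eval v.list, (k.cont.eval w).Dom
  | 3, [k, v] => (k.cont.eval v.list).Dom
  | _, _ => True

/-- A configuration term halts if the evaluation it denotes does; any other term halts. -/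
def Halts : Term → Prop
  | .var _ => True
  | .app f ts => haltsApp f (ts.map den)

theorem bind_dom {α β : Type} {x : Part α} {g : α → Part β} :
    (x >>= g).Dom ↔ ∃ a ∈ x, (g a).Dom := by
  simp only [Part.bind_eq_bind, Part.dom_iff_mem, Part.mem_bind_iff]
  exact ⟨fun ⟨y, a, ha, h⟩ => ⟨a, ha, y, h⟩, fun ⟨a, ha, y, h⟩ => ⟨y, a, ha, h⟩⟩

theorem halt_dom (v : List ℕ) : (Cont.halt.eval v).Dom := trivial

theorem cons₁_dom {f : Code} {k : Cont} {a v : List ℕ} :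
    ((Cont.cons₁ f a k).eval v).Dom ↔ ∃ w ∈ f.eval a, (k.eval (v.headI :: w)).Dom :=
  bind_dom

theorem cons₂_dom {k : Cont} {a v : List ℕ} :
    ((Cont.cons₂ a k).eval v).Dom ↔ (k.eval (a.headI :: v)).Dom := Iff.rfl

theorem comp_dom {f : Code} {k : Cont} {v : List ℕ} :
    ((Cont.comp f k).eval v).Dom ↔ ∃ w ∈ f.eval v, (k.eval w).Dom :=
  bind_dom

theorem fix_dom {f : Code} {k : Cont} {v : List ℕ} :
    ((Cont.fix f k).eval v).Dom ↔ if v.headI = 0 then (k.eval v.tail).Dom else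
      ∃ w ∈ f.fix.eval v.tail, (k.eval w).Dom := by
  rw [Cont.eval]
  dsimp only
  split_ifs
  exacts [Iff.rfl, bind_dom]

theorem mem_cons_eval {f g : Code} {v w : List ℕ} :
    w ∈ (f.cons g).eval v ↔ ∃ a ∈ f.eval v, ∃ b ∈ g.eval v, w = a.headI :: b := by
  simp

theorem mem_comp_eval {f g : Code} {v w : List ℕ} :
    w ∈ (f.comp g).eval v ↔ ∃ a ∈ g.eval v, w ∈ f.eval a := by
  rw [Code.comp_eval]
  exact Part.mem_bind_iff

/-- One unfolding of the evaluation of `fix f`, with the loop test left to a `fix` continuation. -/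
theorem exists_fix_eval {f : Code} {k : Cont} {v : List ℕ} :
    (∃ w ∈ f.eval v, ((Cont.fix f k).eval w).Dom) → ∃ u ∈ f.fix.eval v, (k.eval u).Dom := by
  rintro ⟨w, h, h'⟩
  rw [fix_dom] at h'
  rw [Code.fix_eval]
  split_ifs at h' with h₀
  · exact ⟨w.tail, PFun.mem_fix_iff.2 (.inl ((Part.mem_map_iff _).2 ⟨w, h, by simp [h₀]⟩)), h'⟩
  · obtain ⟨x, hx, hu⟩ := h'
    rw [Code.fix_eval] at hx
    exact ⟨x, PFun.mem_fix_iff.2 (.inr ⟨w.tail, (Part.mem_map_iff _).2 ⟨w, h, by simp [h₀]⟩, hx⟩),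
      hu⟩

/-- Soundness of the interpreter rules, for arbitrary instances: the denotation is unchanged, and
halting is reflected. The `fix` rule and the last rule for a `fix` continuation are handled by
`exists_fix_eval`. -/
theorem rules_sound (σ : ℕ → Term) : ∀ p ∈ rules,
    den (p.1.subst σ) = den (p.2.subst σ) ∧ (Halts (p.2.subst σ) → Halts (p.1.subst σ)) := by
  simp only [rules, List.forall_mem_cons]
  simp [tEv, tRet, tA, cZero, cSucc, cTail, cCons, cComp, cCase, cFix, kHalt, kCons₁, kCons₂, kComp,
    kFix, nZ, nS, lNil, lCons, den, denApp, Halts, haltsApp, halt_dom, cons₁_dom, cons₂_dom,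
    comp_dom, fix_dom, mem_cons_eval, mem_comp_eval, -Code.cons_eval, -Code.comp_eval,
    -Code.fix_eval, -Part.bind_eq_bind]
  refine ⟨fun x hx y hy h => ⟨x, y, ⟨hx, hy⟩, h⟩, fun x hx y hy h => ⟨y, ⟨x, hx, hy⟩, h⟩,
    fun x hx h => exists_fix_eval ⟨x, hx, fix_dom.2 h⟩,
    fun x hx h => exists_fix_eval ⟨x, hx, fix_dom.2 h⟩⟩

/-- Rewriting preserves denotations, and reflects halting. -/
theorem rewrite_sound {c k v t u : Term} (h : Rewrite (R (tEv c k v)) t u) :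
    den t = den u ∧ (Halts u → Halts t) := by
  induction h with
  | rule l r σ h =>
    simp only [R, List.mem_cons] at h
    rcases h with h | h | h
    · obtain ⟨rfl, rfl⟩ := Prod.ext_iff.1 h
      simp [tGo, tA, den, denApp, Halts, haltsApp]
    · obtain ⟨rfl, rfl⟩ := Prod.ext_iff.1 h
      simp [tGo, tEv, den, denApp, Halts, haltsApp]
    · exact rules_sound σ _ h
  | congr f ts₁ ts₂ t t' _ ih => simp [den, Halts, ih.1]

theorem halts_of_reduces {c k v t u : Term} (h : Reduces (R (tEv c k v)) t u) (hu : Halts u) :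
    Halts t := by
  induction h using Relation.ReflTransGen.head_induction_on with
  | refl => exact hu
  | head h _ ih => exact (rewrite_sound h).2 ih

theorem den_encN (n : ℕ) : (den (encN n)).num = n := by
  induction n with
  | zero => simp [encN, nZ, den, denApp]
  | succ n ih => simp [encN, nS, den, denApp, ih]

theorem den_encL (v : List ℕ) : (den (encL v)).list = v := by
  induction v with
  | nil => simp [encL, lNil, den, denApp]
  | cons n v ih => simp [encL, lCons, den, denApp, ih, den_encN]

theorem den_encC (c : Code) : (den (encC c)).code = c := by
  induction c <;> simp_all [encC, cZero, cSucc, cTail, cCons, cComp, cCase, cFix, den, denApp]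

/-- The configuration evaluating `c` on the one-element list `[n]`. -/
def start (c : Code) (n : ℕ) : Term := tEv (encC c) kHalt (encL [n])

/-- The interpreter reaches `a` from the start configuration exactly when the evaluation halts:
`Halts a` holds trivially, and `Halts` is pulled back along reductions. -/
theorem reduces_a_iff (c : Code) (n : ℕ) :
    Reduces (R (start c n)) (start c n) tA ↔ (c.eval [n]).Dom := by
  constructor
  · intro h
    have := halts_of_reduces h (by simp [tA, Halts, haltsApp])
    simp only [start, tEv, Halts, haltsApp, List.map_cons, List.map_nil, den_encC, den_encL] at this
    exact Part.dom_iff_mem.2 (this.imp fun _ h => h.1)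
  · intro h
    obtain ⟨w, hw⟩ := Part.dom_iff_mem.1 h
    refine red_trans (ev_reduces c [n] w kHalt hw) ?_
    simpa [tRet, kHalt, tA] using
      rw_rule (s := start c n) (tRet kHalt x₀) tA [encL w] (by simp [rules])

theorem app_nil_rewrite {R : List (Term × Term)} {f : ℕ} {u : Term}
    (h : Rewrite R (.app f []) u) : ∃ l r σ, (l, r) ∈ R ∧ l.subst σ = .app f [] ∧ u = r.subst σ := by
  generalize ht : Term.app f [] = t at h
  cases h with
  | rule l r σ h => exact ⟨l, r, σ, h, rfl, rfl⟩
  | congr => simp at ht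

/-- The constant `a` is a normal form, as the left-hand sides have other root symbols. -/
theorem a_normal {s u : Term} : ¬ Rewrite (R s) tA u := by
  intro h
  obtain ⟨l, r, σ, h, h', -⟩ := app_nil_rewrite h
  simp only [R, rules, List.mem_cons, List.not_mem_nil, or_false, Prod.mk.injEq] at h
  rcases h with h | h | h | h | h | h | h | h | h | h | h | h | h | h | h | h | h | h | h | h | h <;>
    simp [h.1, tGo, tEv, tRet] at h'

theorem go_rewrite {s u : Term} (hs : Ground s) (hu : Rewrite (R s) tGo u) : u = tA ∨ u = s := by
  obtain ⟨l, r, σ, h, h', rfl⟩ := app_nil_rewrite hu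
  simp only [R, rules, List.mem_cons, List.not_mem_nil, or_false, Prod.mk.injEq] at h
  rcases h with h | h | h | h | h | h | h | h | h | h | h | h | h | h | h | h | h | h | h | h | h
  · simp [h.2, tA]
  · rw [h.2, Term.subst_ground hs]
    exact .inr rfl
  all_goals simp [h.1, tEv, tRet] at h'

theorem ground_encN (n : ℕ) : Ground (encN n) ∧ WFTerm sig (encN n) := by
  induction n with
  | zero => simp [encN, nZ, Ground, sig]
  | succ n ih => simpa [encN, nS, Ground, sig] using ih

theorem ground_encL (v : List ℕ) : Ground (encL v) ∧ WFTerm sig (encL v) := by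
  induction v with
  | nil => simp [encL, lNil, Ground, sig]
  | cons n v ih =>
    have := ground_encN n
    simp_all [encL, lCons, Ground, sig]

theorem ground_encC (c : Code) : Ground (encC c) ∧ WFTerm sig (encC c) := by
  induction c <;>
    simp_all [encC, cZero, cSucc, cTail, cCons, cComp, cCase, cFix, Ground, sig]

theorem ground_start (c : Code) (n : ℕ) : Ground (start c n) ∧ WFTerm sig (start c n) := by
  have := ground_encC c
  have := ground_encL [n]
  simp_all [start, tEv, kHalt, Ground, sig]

theorem wf_rules : ∀ p ∈ rules, WFTerm sig p.1 ∧ WFTerm sig p.2 ∧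
    (∀ n : ℕ, p.1 ≠ .var n) ∧ (∀ n : ℕ, IsVarOf n p.2 → IsVarOf n p.1) := by
  simp only [rules, List.forall_mem_cons]
  simp [tEv, tRet, tA, cZero, cSucc, cTail, cCons, cComp, cCase, cFix, kHalt, kCons₁, kCons₂, kComp,
    kFix, nZ, nS, lNil, lCons, sig]
  grind

theorem wf_R {s : Term} (hs : Ground s) (hs' : WFTerm sig s) : WFTRS sig (R s) := by
  refine ⟨by unfold WFSig; decide, ?_⟩
  simp only [R, List.forall_mem_cons]
  refine ⟨?_, ?_, wf_rules⟩
  · simp [tGo, tA, sig]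
  · refine ⟨by simp [tGo, sig], hs', by simp [tGo], fun n hn => absurd hn (hs n)⟩

/-- Weak confluence on `go` amounts to `s →* a`, because `a` is a normal form. -/
theorem wcr_iff {s : Term} (hs : Ground s) : WCRon (R s) tGo ↔ Reduces (R s) s tA := by
  have ha : Rewrite (R s) tGo tA := by
    simpa [tGo, tA] using Rewrite.rule (R := R s) tGo tA .var (by simp [R])
  have hb : Rewrite (R s) tGo s := by
    simpa [tGo, Term.subst_ground hs] using Rewrite.rule (R := R s) tGo s .var (by simp [R])
  constructor
  · intro h
    obtain ⟨d, h₁, h₂⟩ := h _ _ ha hb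
    obtain rfl | ⟨u, h, -⟩ := Relation.ReflTransGen.cases_head h₁
    · exact h₂
    · exact absurd h a_normal
  · intro h t₁ t₂ h₁ h₂
    refine ⟨tA, ?_, ?_⟩
    · rcases go_rewrite hs h₁ with rfl | rfl
      exacts [.refl, h]
    · rcases go_rewrite hs h₂ with rfl | rfl
      exacts [.refl, h]

end Interp

/-! ### The coding of terms by numbers -/

theorem encode_list_map {α : Type*} [Encodable α] (g : α → ℕ) (hg : ∀ a, g a = Encodable.encode a)
    (l : List α) : Encodable.encode (l.map g) = Encodable.encode l := by
  induction l with
  | nil => simp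
  | cons a l ih => simp [ih, hg]

theorem lt_encode_of_mem {x : ℕ} {l : List ℕ} (h : x ∈ l) : x < Encodable.encode l := by
  induction l with
  | nil => simp at h
  | cons a l ih =>
    rw [Encodable.encode_list_cons]
    rcases List.mem_cons.1 h with rfl | h
    · exact Nat.lt_succ_of_le (Nat.left_le_pair _ _)
    · exact (ih h).trans (Nat.lt_succ_of_le (Nat.right_le_pair _ _))

theorem Term.encode_injective : Function.Injective Term.encode := by
  intro t
  induction t using Term.ind with
  | hv n =>
    rintro (m | ⟨g, us⟩) h
    · simpa using h
    · simp at h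
  | ha f ts ih =>
    rintro (m | ⟨g, us⟩) h
    · simp at h
    · simp only [encode_app, Nat.pair_eq_pair, add_left_inj, Encodable.encode_inj] at h
      obtain ⟨rfl, h⟩ := h
      congr 1
      induction ts generalizing us with
      | nil => simpa using h.symm
      | cons t ts ih' =>
        obtain - | ⟨u, us⟩ := us
        · simp at h
        · simp only [List.map_cons, List.cons.injEq] at h
          rw [ih t (by simp) h.1, ih' (fun t ht => ih t (by simp [ht])) us h.2]

instance : Inhabited Term := ⟨.var 0⟩

theorem Term.encode_surjective : Function.Surjective Term.encode := by
  intro n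
  induction n using Nat.strong_induction_on with
  | _ n ih =>
    obtain ⟨a, b, rfl⟩ : ∃ a b, n = Nat.pair a b := ⟨_, _, (Nat.pair_unpair n).symm⟩
    obtain - | f := a
    · exact ⟨.var b, by simp⟩
    · obtain ⟨l, rfl⟩ : ∃ l : List ℕ, Encodable.encode l = b :=
        ⟨Denumerable.ofNat _ b, Denumerable.encode_ofNat b⟩
      have : ∀ x ∈ l, ∃ t : Term, t.encode = x := fun x hx =>
        ih x ((lt_encode_of_mem hx).trans_le (Nat.right_le_pair _ _))
      choose! g hg using this
      refine ⟨.app f (l.map g), ?_⟩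
      rw [encode_app, List.map_map]
      congr 2
      conv_rhs => rw [← List.map_id l]
      exact List.map_congr_left fun x hx => hg x hx

/-- The coding of terms is a bijection with the natural numbers. -/
noncomputable def Term.equivNat : Term ≃ ℕ :=
  Equiv.ofBijective Term.encode ⟨Term.encode_injective, Term.encode_surjective⟩

noncomputable instance : Denumerable Term := Denumerable.mk' Term.equivNat

theorem encode_term (t : Term) : Encodable.encode t = t.encode := rfl

theorem encode_map_term (ts : List Term) :
    Encodable.encode (ts.map Term.encode) = Encodable.encode ts :=
  encode_list_map _ (fun _ => rfl) ts

/-- The codes of triples in the theorem agree with the `Encodable` instances, so `Primrec` lemmas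
apply to them. -/
theorem encode_code (sg : List (ℕ × ℕ)) (R : List (Term × Term)) (t : Term) :
    Nat.pair (encodeSig sg) (Nat.pair (encodeTRS R) t.encode) = Encodable.encode (sg, R, t) := by
  rw [Encodable.encode_prod_val, Encodable.encode_prod_val, encode_term, encodeSig, encodeTRS,
    encode_list_map]
  rintro ⟨l, r⟩
  rfl

theorem primrec_var : Primrec Term.var :=
  Primrec.encode_iff.1 <| (Primrec₂.natPair.comp (.const 0) .id).of_eq fun n => by
    rw [encode_term, Term.encode_var, id]

theorem primrec_app : Primrec₂ Term.app :=
  Primrec.encode_iff.1 <| (Primrec₂.natPair.comp (Primrec.succ.comp .fst)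
    (Primrec.encode.comp .snd)).of_eq fun p => by
      rw [encode_term, Term.encode_app, encode_map_term]

theorem ofNat_var (n : ℕ) : Denumerable.ofNat Term (Nat.pair 0 n) = .var n := by
  rw [← Term.encode_var, ← encode_term, Denumerable.ofNat_encode]

theorem ofNat_app (f : ℕ) (ts : List Term) :
    Denumerable.ofNat Term (Nat.pair (f + 1) (Encodable.encode ts)) = .app f ts := by
  rw [← encode_map_term, ← Term.encode_app, ← encode_term, Denumerable.ofNat_encode]

/-- Structural recursion on terms is primitive recursive: course-of-values recursion on the codes,
as the code of a term exceeds those of its arguments. -/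
theorem primrec_fold {α σ : Type*} [Primcodable α] [Primcodable σ] [Inhabited σ]
    (F : α → Term → σ) {V : α → ℕ → σ} {A : α → ℕ × List Term × List σ → σ}
    (hV : Primrec₂ V) (hA : Primrec₂ A) (hv : ∀ a n, F a (.var n) = V a n)
    (ha : ∀ a f ts, F a (.app f ts) = A a (f, ts, ts.map (F a))) : Primrec₂ F := by
  have key : Primrec₂ fun (a : α) (n : ℕ) => F a (Denumerable.ofNat Term n) := by
    let g : α → List σ → Option σ := fun a L =>
      some (if L.length.unpair.1 = 0 then V a L.length.unpair.2 else
        A a (L.length.unpair.1 - 1, Denumerable.ofNat (List Term) L.length.unpair.2,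
          (Denumerable.ofNat (List ℕ) L.length.unpair.2).map fun c => L.getD c default))
    have hg : Primrec₂ g := by
      have hu : Primrec fun p : α × List σ => p.2.length.unpair :=
        Primrec.unpair.comp (Primrec.list_length.comp .snd)
      have h₁ := Primrec.fst.comp hu
      have h₂ := Primrec.snd.comp hu
      refine Primrec.option_some.comp (Primrec.ite (Primrec.eq.comp h₁ (.const 0))
        (hV.comp .fst h₂) (hA.comp .fst (.pair (Primrec.nat_sub.comp h₁ (.const 1))
          (.pair ((Primrec.ofNat _).comp h₂) (Primrec.list_map ((Primrec.ofNat _).comp h₂) ?_)))))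
      exact (Primrec.list_getD default).comp (Primrec.snd.comp .fst) .snd
    refine Primrec.nat_strong_rec _ hg fun a n => ?_
    simp only [g, List.length_map, List.length_range, Option.some.injEq]
    obtain ⟨b, c, rfl⟩ : ∃ a b, n = Nat.pair a b := ⟨_, _, (Nat.pair_unpair n).symm⟩
    obtain - | f := b
    · simp [hv, ofNat_var]
    · obtain ⟨ts, rfl⟩ : ∃ l : List Term, Encodable.encode l = c :=
        ⟨Denumerable.ofNat _ c, Denumerable.encode_ofNat c⟩
      simp only [Nat.unpair_pair, Nat.add_eq_zero_iff, one_ne_zero, and_false, if_false,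
        Nat.add_sub_cancel, Denumerable.ofNat_encode, ofNat_app, ha]
      congr 3
      rw [← encode_map_term ts, Denumerable.ofNat_encode, List.map_map]
      refine List.map_congr_left fun t ht => ?_
      have : t.encode < Nat.pair (f + 1) (Encodable.encode (ts.map Term.encode)) :=
        (lt_encode_of_mem (List.mem_map_of_mem ht)).trans_le (Nat.right_le_pair _ _)
      rw [Function.comp_apply, List.getD_eq_getElem _ _ (by simpa using this)]
      simp [← encode_term]
  exact (key.comp .fst (Primrec.encode.comp .snd)).of_eq fun p => by simp

/-! ### Decidability of the syntactic conditions -/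

/-- The variables of a term. -/
def Term.vars : Term → List ℕ
  | .var n => [n]
  | .app _ ts => (ts.map vars).flatten

theorem mem_vars {n : ℕ} {t : Term} : n ∈ t.vars ↔ IsVarOf n t := by
  induction t using Term.ind with
  | hv m => simp [Term.vars]
  | ha f ts ih =>
    simp only [Term.vars, List.mem_flatten, List.mem_map, isVarOf_app]
    exact ⟨fun ⟨_, ⟨u, hu, h⟩, h'⟩ => ⟨u, hu, (ih u hu).1 (h ▸ h')⟩,
      fun ⟨u, hu, h⟩ => ⟨_, ⟨u, hu, rfl⟩, (ih u hu).2 h⟩⟩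

theorem primrec_vars : Primrec Term.vars := by
  have : Primrec₂ fun (_ : Unit) t => Term.vars t :=
    primrec_fold _ (V := fun _ n => [n]) (A := fun _ p => p.2.2.flatten)
      (Primrec.list_cons.comp .snd (.const []))
      (Primrec.list_flatten.comp (Primrec.snd.comp (Primrec.snd.comp .snd)))
      (by simp [Term.vars]) (by simp [Term.vars])
  exact this.comp (.const ()) .id

/-- The subterms of a term. -/
def Term.subs : Term → List Term
  | .var n => [.var n]
  | .app f ts => .app f ts :: (ts.map subs).flatten

theorem Term.mem_subs_self (t : Term) : t ∈ t.subs := by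
  cases t <;> simp [Term.subs]

theorem primrec_subs : Primrec Term.subs := by
  have : Primrec₂ fun (_ : Unit) t => Term.subs t :=
    primrec_fold _ (V := fun _ n => [.var n]) (A := fun _ p => .app p.1 p.2.1 :: p.2.2.flatten)
      (Primrec.list_cons.comp (primrec_var.comp .snd) (.const []))
      (Primrec.list_cons.comp
        (primrec_app.comp (Primrec.fst.comp .snd) (Primrec.fst.comp (Primrec.snd.comp .snd)))
        (Primrec.list_flatten.comp (Primrec.snd.comp (Primrec.snd.comp .snd))))
      (by simp [Term.subs]) (by simp [Term.subs])
  exact this.comp (.const ()) .id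

theorem mem_subs_of_isVarOf {σ : ℕ → Term} {n : ℕ} {t : Term} (h : IsVarOf n t) :
    σ n ∈ (t.subst σ).subs := by
  induction h with
  | var => simpa using Term.mem_subs_self _
  | app ht _ ih =>
    simp only [Term.subst_app, Term.subs, List.mem_cons, List.mem_flatten, List.map_map,
      List.mem_map]
    exact .inr ⟨_, ⟨_, ht, rfl⟩, ih⟩

/-- The substitution given by a list of terms, with a default value beyond its length. -/
def listSubst (s : List Term) (n : ℕ) : Term := s.getD n (.var 0)

theorem primrec_subst : Primrec₂ fun (s : List Term) (t : Term) => t.subst (listSubst s) :=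
  primrec_fold _ (V := listSubst) (A := fun _ p => .app p.1 p.2.2)
    (Primrec.list_getD _)
    (primrec_app.comp (Primrec.fst.comp .snd) (Primrec.snd.comp (Primrec.snd.comp .snd)))
    (by simp) (by simp)

/-- Boolean version of `WFTerm`. -/
def wfTermB (sg : List (ℕ × ℕ)) : Term → Bool
  | .var _ => true
  | .app f ts => decide ((f, ts.length) ∈ sg ∧ ∀ b ∈ ts.map (wfTermB sg), b = true)

theorem wfTermB_iff {sg : List (ℕ × ℕ)} {t : Term} : wfTermB sg t = true ↔ WFTerm sg t := by
  induction t using Term.ind with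
  | hv n => simp [wfTermB]
  | ha f ts ih => simp +contextual [wfTermB, ih]

theorem primrecPred_forall {α β : Type*} [Primcodable α] [Primcodable β] {f : α → List β}
    {p : α → β → Prop} (hf : Primrec f) (hp : PrimrecRel p) :
    PrimrecPred fun a => ∀ b ∈ f a, p a b :=
  (PrimrecRel.forall_mem_list (R := fun b a => p a b) (hp.comp .snd .fst)).comp hf .id

theorem primrecPred_exists {α β : Type*} [Primcodable α] [Primcodable β] {f : α → List β}
    {p : α → β → Prop} (hf : Primrec f) (hp : PrimrecRel p) :
    PrimrecPred fun a => ∃ b ∈ f a, p a b :=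
  (PrimrecRel.exists_mem_list (R := fun b a => p a b) (hp.comp .snd .fst)).comp hf .id

theorem primrecPred_mem {α β : Type*} [Primcodable α] [Primcodable β] {f : α → β} {g : α → List β}
    (hf : Primrec f) (hg : Primrec g) : PrimrecPred fun a => f a ∈ g a :=
  (primrecPred_exists hg (p := fun a b => b = f a)
    (Primrec.eq.comp .snd (hf.comp .fst))).of_eq fun a => by simp

theorem primrec_wfTermB : Primrec₂ wfTermB := by
  refine primrec_fold _ (V := fun _ _ => true)
    (A := fun sg p => decide ((p.1, p.2.1.length) ∈ sg ∧ ∀ b ∈ p.2.2, b = true))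
    (Primrec.const true).to₂ ?_ (by simp [wfTermB]) (by simp [wfTermB])
  refine PrimrecPred.decide (.and (primrecPred_mem ?_ .fst) ?_)
  · exact .pair (Primrec.fst.comp .snd)
      (Primrec.list_length.comp (Primrec.fst.comp (Primrec.snd.comp .snd)))
  · exact primrecPred_forall (Primrec.snd.comp (Primrec.snd.comp .snd))
      (Primrec.eq.comp .snd (.const true))

theorem primrecPred_wfTerm {α : Type*} [Primcodable α] {f : α → List (ℕ × ℕ)} {g : α → Term}
    (hf : Primrec f) (hg : Primrec g) : PrimrecPred fun a => WFTerm (f a) (g a) :=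
  (Primrec.eq.comp (primrec_wfTermB.comp hf hg) (.const true)).of_eq fun _ => wfTermB_iff

theorem primrecPred_ground : PrimrecPred Ground :=
  (Primrec.eq.comp primrec_vars (.const [])).of_eq fun t => by
    simp [Ground, ← mem_vars, List.eq_nil_iff_forall_not_mem]

theorem primrecPred_isVar : PrimrecPred fun t : Term => ∀ n : ℕ, t ≠ .var n :=
  (Primrec.eq.comp (Primrec.fst.comp (Primrec.unpair.comp .encode)) (.const 0)).not.of_eq fun t => by
    cases t <;> simp [encode_term]

theorem primrecPred_wfTRS : PrimrecPred fun x : List (ℕ × ℕ) × List (Term × Term) =>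
    WFTRS x.1 x.2 := by
  refine .and ?_ (primrecPred_forall .snd ?_)
  · refine primrecPred_forall .fst (primrecPred_forall (Primrec.fst.comp .fst) ?_)
    have h₁ := Primrec.snd.comp (Primrec.fst
      (α := (List (ℕ × ℕ) × List (Term × Term)) × (ℕ × ℕ)) (β := ℕ × ℕ))
    have h₂ := Primrec.snd (α := (List (ℕ × ℕ) × List (Term × Term)) × (ℕ × ℕ)) (β := ℕ × ℕ)
    exact (PrimrecPred.or
      (PrimrecPred.not (Primrec.eq.comp (Primrec.fst.comp h₁) (Primrec.fst.comp h₂)))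
      (Primrec.eq.comp (Primrec.snd.comp h₁) (Primrec.snd.comp h₂))).of_eq fun _ => imp_iff_not_or.symm
  · have h₁ := Primrec.fst.comp (Primrec.snd
      (α := List (ℕ × ℕ) × List (Term × Term)) (β := Term × Term))
    have h₂ := Primrec.snd.comp (Primrec.snd
      (α := List (ℕ × ℕ) × List (Term × Term)) (β := Term × Term))
    refine .and (primrecPred_wfTerm (Primrec.fst.comp .fst) h₁) <|
      .and (primrecPred_wfTerm (Primrec.fst.comp .fst) h₂) <| .and (primrecPred_isVar.comp h₁) ?_
    refine (primrecPred_forall (p := fun a n => n ∈ a.2.1.vars) (primrec_vars.comp h₂)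
      (primrecPred_mem .snd (primrec_vars.comp (h₁.comp .fst)))).of_eq fun a => ?_
    simp [mem_vars]

/-! ### Computing one-step reducts -/

/-- All lists of length `N` with entries from `S`. -/
def tuples (S : List Term) : ℕ → List (List Term)
  | 0 => [[]]
  | N + 1 => S.flatMap fun t => (tuples S N).map (t :: ·)

theorem mem_tuples {S s : List Term} (h : ∀ t ∈ s, t ∈ S) : s ∈ tuples S s.length := by
  induction s with
  | nil => simp [tuples]
  | cons t s ih =>
    simp only [List.length_cons, tuples, List.mem_flatMap, List.mem_map]
    exact ⟨t, h t (by simp), s, ih fun u hu => h u (by simp [hu]), rfl⟩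

theorem primrec_tuples : Primrec₂ tuples := by
  refine (Primrec.nat_rec' (f := fun p : List Term × ℕ => p.2) (g := fun _ => [[]])
    (h := fun p q => p.1.flatMap fun t => q.2.map (t :: ·)) .snd (.const _) ?_).of_eq ?_
  · refine Primrec.list_flatMap (Primrec.fst.comp .fst) ?_
    exact Primrec.list_map (Primrec.snd.comp (Primrec.snd.comp .fst))
      (Primrec.list_cons.comp (Primrec.snd.comp .fst) .snd)
  · rintro ⟨S, N⟩
    induction N with
    | zero => rfl
    | succ N ih => simp only [tuples, ← ih]

open Classical in
/-- The results of root steps from `t`. The values of a matching substitution on the variables of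
the left-hand side are subterms of `t`, and those variables are bounded by the code of the
left-hand side, so finitely many candidate substitutions suffice. -/
noncomputable def rootReducts (R : List (Term × Term)) (t : Term) : List Term :=
  R.flatMap fun p => (tuples t.subs (p.1.encode + 1)).flatMap fun s =>
    if p.1.subst (listSubst s) = t then [p.2.subst (listSubst s)] else []

theorem primrec_rootReducts : Primrec₂ rootReducts := by
  classical
  refine Primrec.list_flatMap .fst (Primrec.list_flatMap (primrec_tuples.comp
    (primrec_subs.comp (Primrec.snd.comp .fst))
    (Primrec.succ.comp (Primrec.encode.comp (Primrec.fst.comp .snd)))) (Primrec.ite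
      (Primrec.eq.comp ?_ (Primrec.snd.comp (Primrec.fst.comp .fst)))
      (Primrec.list_cons.comp ?_ (.const [])) (.const [])))
  · exact primrec_subst.comp .snd (Primrec.fst.comp (Primrec.snd.comp .fst))
  · exact primrec_subst.comp .snd (Primrec.snd.comp (Primrec.snd.comp .fst))

/-- The variables of a term are bounded by its code. -/
theorem var_le_encode {n : ℕ} {t : Term} (h : IsVarOf n t) : n ≤ t.encode := by
  induction h with
  | var => simpa using Nat.right_le_pair _ _
  | app ht _ ih =>
    rw [Term.encode_app]
    exact ih.trans ((lt_encode_of_mem (List.mem_map_of_mem ht)).le.trans (Nat.right_le_pair _ _))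

theorem mem_rootReducts {R : List (Term × Term)} {t u : Term}
    (hR : ∀ p ∈ R, ∀ n, IsVarOf n p.2 → IsVarOf n p.1) :
    u ∈ rootReducts R t ↔ ∃ l r σ, (l, r) ∈ R ∧ t = l.subst σ ∧ u = r.subst σ := by
  simp only [rootReducts, List.mem_flatMap]
  constructor
  · rintro ⟨p, hp, s, -, h⟩
    split_ifs at h with h'
    · exact ⟨p.1, p.2, _, hp, h'.symm, by simpa using h⟩
    · simp at h
  · rintro ⟨l, r, σ, h, rfl, rfl⟩
    classical
    -- The entry at an index that is not a variable of `l` is arbitrary.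
    let s := (List.range (l.encode + 1)).map fun n => if IsVarOf n l then σ n else l.subst σ
    have hs : ∀ n, IsVarOf n l → listSubst s n = σ n := fun n hn => by
      have := var_le_encode hn
      have hlt : n < s.length := by simp only [s, List.length_map, List.length_range]; omega
      rw [listSubst, List.getD_eq_getElem _ _ hlt]
      simp [s, hn]
    refine ⟨(l, r), h, s, ?_, ?_⟩
    · convert mem_tuples (S := (l.subst σ).subs) (s := s) ?_
      · simp [s]
      · intro t ht
        obtain ⟨n, -, rfl⟩ := List.mem_map.1 ht
        split_ifs with hn
        · exact mem_subs_of_isVarOf hn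
        · exact Term.mem_subs_self _
    · rw [if_pos (Term.subst_congr l hs), List.mem_singleton]
      exact (Term.subst_congr r fun n hn => hs n (hR _ h n hn)).symm

/-- From a list of terms, each paired with a list of replacements: the list of terms, and all lists
obtained from it by a single replacement. -/
def replaceOne (P : List (Term × List Term)) : List Term × List (List Term) :=
  P.foldr (fun x q => (x.1 :: q.1, x.2.map (· :: q.1) ++ q.2.map (x.1 :: ·))) ([], [])

theorem replaceOne_fst (P : List (Term × List Term)) : (replaceOne P).1 = P.map Prod.fst := by
  induction P with
  | nil => rfl
  | cons x P ih => simpa [replaceOne] using ih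

theorem mem_replaceOne {P : List (Term × List Term)} {us : List Term} :
    us ∈ (replaceOne P).2 ↔ ∃ P₁ x P₂ u, P = P₁ ++ x :: P₂ ∧ u ∈ x.2 ∧
      us = P₁.map Prod.fst ++ u :: P₂.map Prod.fst := by
  induction P generalizing us with
  | nil => simp [replaceOne]
  | cons x P ih =>
    have : (replaceOne (x :: P)).2 =
      x.2.map (· :: (replaceOne P).1) ++ (replaceOne P).2.map (x.1 :: ·) := rfl
    rw [this, List.mem_append, List.mem_map, List.mem_map, replaceOne_fst]
    constructor
    · rintro (⟨u, hu, rfl⟩ | ⟨vs, hv, rfl⟩)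
      · exact ⟨[], x, P, u, rfl, hu, rfl⟩
      · obtain ⟨P₁, y, P₂, u, rfl, hu, rfl⟩ := ih.1 hv
        exact ⟨x :: P₁, y, P₂, u, rfl, hu, rfl⟩
    · rintro ⟨_ | ⟨z, P₁⟩, y, P₂, u, h, hu, rfl⟩
      · simp only [List.nil_append, List.cons.injEq] at h
        obtain ⟨rfl, rfl⟩ := h
        exact .inl ⟨u, hu, rfl⟩
      · simp only [List.cons_append, List.cons.injEq] at h
        obtain ⟨rfl, rfl⟩ := h
        exact .inr ⟨_, ih.2 ⟨P₁, y, P₂, u, rfl, hu, rfl⟩, rfl⟩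

theorem primrec_replaceOne : Primrec replaceOne := by
  refine Primrec.list_foldr (h := fun (_ : List (Term × List Term))
    (p : (Term × List Term) × List Term × List (List Term)) => (p.1.1 :: p.2.1, p.1.2.map (· :: p.2.1) ++
    p.2.2.map (p.1.1 :: ·))) .id (.const _) ?_
  have h₁ := Primrec.fst.comp (Primrec.snd (α := List (Term × List Term))
    (β := (Term × List Term) × List Term × List (List Term)))
  have h₂ := Primrec.snd.comp (Primrec.snd (α := List (Term × List Term))
    (β := (Term × List Term) × List Term × List (List Term)))
  refine Primrec.pair (Primrec.list_cons.comp (Primrec.fst.comp h₁) (Primrec.fst.comp h₂))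
    (Primrec.list_append.comp (Primrec.list_map (Primrec.snd.comp h₁) ?_)
      (Primrec.list_map (Primrec.snd.comp h₂) ?_))
  · exact Primrec.list_cons.comp .snd (Primrec.fst.comp (h₂.comp .fst))
  · exact Primrec.list_cons.comp (Primrec.fst.comp (h₁.comp .fst)) .snd

/-- The list of one-step reducts of a term. -/
noncomputable def reducts (R : List (Term × Term)) : Term → List Term
  | .var n => rootReducts R (.var n)
  | .app f ts => rootReducts R (.app f ts) ++
      (replaceOne (ts.map fun t => (t, reducts R t))).2.map (.app f)

theorem primrec_reducts : Primrec₂ reducts := by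
  have : Primrec₂ fun R t => (t, reducts R t) := by
    refine primrec_fold _ (V := fun R n => (.var n, rootReducts R (.var n)))
      (A := fun R p => (.app p.1 p.2.1, rootReducts R (.app p.1 p.2.1) ++
        (replaceOne p.2.2).2.map (.app p.1))) ?_ ?_ (by simp [reducts]) (by simp [reducts])
    · exact Primrec.pair (primrec_var.comp .snd) (primrec_rootReducts.comp .fst (primrec_var.comp .snd))
    · have h : Primrec fun x : List (Term × Term) × ℕ × List Term × List (Term × List Term) =>
          Term.app x.2.1 x.2.2.1 :=
        primrec_app.comp (Primrec.fst.comp .snd) (Primrec.fst.comp (Primrec.snd.comp .snd))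
      refine Primrec.pair h (Primrec.list_append.comp (primrec_rootReducts.comp .fst h)
        (Primrec.list_map (Primrec.snd.comp (primrec_replaceOne.comp
          (Primrec.snd.comp (Primrec.snd.comp .snd)))) ?_))
      exact primrec_app.comp (Primrec.fst.comp (Primrec.snd.comp .fst)) .snd
  exact Primrec.snd.comp this

theorem mem_reducts {R : List (Term × Term)} (hR : ∀ p ∈ R, ∀ n, IsVarOf n p.2 → IsVarOf n p.1)
    {t u : Term} : u ∈ reducts R t ↔ Rewrite R t u := by
  have root {t u : Term} (h : u ∈ rootReducts R t) : Rewrite R t u := by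
    obtain ⟨l, r, σ, hlr, rfl, rfl⟩ := (mem_rootReducts hR).1 h
    exact .rule l r σ hlr
  constructor
  · induction t using Term.ind generalizing u with
    | hv n =>
      rw [reducts]
      exact root
    | ha f ts ih =>
      rw [reducts, List.mem_append, List.mem_map]
      rintro (h | ⟨us, h, rfl⟩)
      · exact root h
      · obtain ⟨P₁, x, P₂, u, hP, hu, rfl⟩ := mem_replaceOne.1 h
        obtain ⟨ts₁, ts', rfl, rfl, hQ⟩ := List.map_eq_append_iff.1 hP
        obtain ⟨t, ts₂, rfl, rfl, rfl⟩ := List.map_eq_cons_iff.1 hQ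
        simpa [Function.comp_def] using Rewrite.congr f ts₁ ts₂ t u (ih t (by simp) hu)
  · intro h
    induction h with
    | rule l r σ h =>
      have := (mem_rootReducts hR).2 ⟨l, r, σ, h, rfl, rfl⟩
      cases h' : l.subst σ <;> rw [h'] at this <;> simp [reducts, this]
    | congr f ts₁ ts₂ t t' h ih =>
      rw [reducts, List.mem_append, List.mem_map]
      refine .inr ⟨_, mem_replaceOne.2 ⟨ts₁.map fun t => (t, reducts R t), (t, reducts R t),
        ts₂.map fun t => (t, reducts R t), t', by simp, ih, rfl⟩,
        by simp [Function.comp_def]⟩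

/-- The terms reachable from `t` in at most `k` steps. -/
noncomputable def reach (R : List (Term × Term)) (t : Term) : ℕ → List Term
  | 0 => [t]
  | k + 1 => reach R t k ++ (reach R t k).flatMap (reducts R)

theorem reach_mono {R : List (Term × Term)} {t u : Term} {k m : ℕ} (hkm : k ≤ m)
    (h : u ∈ reach R t k) : u ∈ reach R t m := by
  induction hkm with
  | refl => exact h
  | step _ ih => exact List.mem_append_left _ ih

theorem reduces_iff {R : List (Term × Term)} (hR : ∀ p ∈ R, ∀ n, IsVarOf n p.2 → IsVarOf n p.1)
    {t u : Term} : Reduces R t u ↔ ∃ k, u ∈ reach R t k := by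
  constructor
  · intro h
    induction h with
    | refl => exact ⟨0, by simp [reach]⟩
    | tail _ h ih =>
      obtain ⟨k, hk⟩ := ih
      exact ⟨k + 1, List.mem_append_right _ (List.mem_flatMap.2 ⟨_, hk, (mem_reducts hR).2 h⟩)⟩
  · rintro ⟨k, h⟩
    induction k generalizing u with
    | zero =>
      obtain rfl : u = t := by simpa [reach] using h
      exact .refl
    | succ k ih =>
      rcases List.mem_append.1 h with h | h
      · exact ih h
      · obtain ⟨v, hv, h⟩ := List.mem_flatMap.1 h
        exact (ih hv).tail ((mem_reducts hR).1 h)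

theorem primrec_reach : Primrec fun x : List (Term × Term) × Term × ℕ => reach x.1 x.2.1 x.2.2 := by
  refine (Primrec.nat_rec' (f := fun x : List (Term × Term) × Term × ℕ => x.2.2)
    (g := fun x => [x.2.1]) (h := fun x q => q.2 ++ q.2.flatMap (reducts x.1))
    (Primrec.snd.comp .snd) (Primrec.list_cons.comp (Primrec.fst.comp .snd) (.const [])) ?_).of_eq ?_
  · exact Primrec.list_append.comp (Primrec.snd.comp .snd) (Primrec.list_flatMap
      (Primrec.snd.comp .snd) (primrec_reducts.comp (Primrec.fst.comp (Primrec.fst.comp .fst)) .snd))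
  · rintro ⟨R, t, k⟩
    induction k with
    | zero => rfl
    | succ N ih => simp only [reach, ← ih]

/-! ### The set is recursively enumerable -/

/-- All one-step reducts of `t` are pairwise joinable within `k` steps. -/
def WCRWithin (R : List (Term × Term)) (t : Term) (k : ℕ) : Prop :=
  ∀ u ∈ reducts R t, ∀ v ∈ reducts R t, ∃ d ∈ reach R u k, d ∈ reach R v k

/-- Finitely many properties, each monotone in the bound and satisfied by some bound, are satisfied by
a common bound. -/
theorem exists_bound {α : Type*} (l : List α) {p : α → ℕ → Prop}
    (hp : ∀ a k m, k ≤ m → p a k → p a m) (h : ∀ a ∈ l, ∃ k, p a k) : ∃ k, ∀ a ∈ l, p a k := by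
  induction l with
  | nil => exact ⟨0, by simp⟩
  | cons a l ih =>
    obtain ⟨k, hk⟩ := h a (by simp)
    obtain ⟨m, hm⟩ := ih fun b hb => h b (by simp [hb])
    refine ⟨max k m, ?_⟩
    rw [List.forall_mem_cons]
    exact ⟨hp _ _ _ (le_max_left _ _) hk, fun b hb => hp _ _ _ (le_max_right _ _) (hm b hb)⟩

theorem wcrOn_iff {R : List (Term × Term)} (hR : ∀ p ∈ R, ∀ n, IsVarOf n p.2 → IsVarOf n p.1)
    {t : Term} : WCRon R t ↔ ∃ k, WCRWithin R t k := by
  constructor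
  · intro h
    refine exists_bound _ ?_ fun u hu => exists_bound _ ?_ fun v hv => ?_
    · intro u k m hkm h v hv
      obtain ⟨d, h₁, h₂⟩ := h v hv
      exact ⟨d, reach_mono hkm h₁, reach_mono hkm h₂⟩
    · rintro v k m hkm ⟨d, h₁, h₂⟩
      exact ⟨d, reach_mono hkm h₁, reach_mono hkm h₂⟩
    · obtain ⟨d, h₁, h₂⟩ := h u v ((mem_reducts hR).1 hu) ((mem_reducts hR).1 hv)
      obtain ⟨k, hk⟩ := (reduces_iff hR).1 h₁
      obtain ⟨m, hm⟩ := (reduces_iff hR).1 h₂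
      exact ⟨max k m, d, reach_mono (le_max_left _ _) hk, reach_mono (le_max_right _ _) hm⟩
  · rintro ⟨k, h⟩ u v hu hv
    obtain ⟨d, h₁, h₂⟩ := h u ((mem_reducts hR).2 hu) v ((mem_reducts hR).2 hv)
    exact ⟨d, (reduces_iff hR).2 ⟨k, h₁⟩, (reduces_iff hR).2 ⟨k, h₂⟩⟩

theorem primrecPred_joinable {α β : Type*} [Primcodable α] [Primcodable β] {f g : α → List β}
    (hf : Primrec f) (hg : Primrec g) : PrimrecPred fun a => ∃ d ∈ f a, d ∈ g a :=
  primrecPred_exists hf (primrecPred_mem .snd (hg.comp .fst))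

theorem primrecPred_pairwise {α β : Type*} [Primcodable α] [Primcodable β] {f : α → List β}
    {g : α → β → List β} (hf : Primrec f) (hg : Primrec₂ g) :
    PrimrecPred fun a => ∀ u ∈ f a, ∀ v ∈ f a, ∃ d ∈ g a u, d ∈ g a v :=
  primrecPred_forall hf <| primrecPred_forall (p := fun (x : α × β) v => ∃ d ∈ g x.1 x.2, d ∈ g x.1 v)
    (hf.comp .fst) <| primrecPred_joinable (hg.comp (Primrec.fst.comp .fst) (Primrec.snd.comp .fst))
      (hg.comp (Primrec.fst.comp .fst) .snd)

theorem primrecPred_wcrWithin :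
    PrimrecPred fun x : (List (Term × Term) × Term) × ℕ => WCRWithin x.1.1 x.1.2 x.2 :=
  primrecPred_pairwise (g := fun (x : (List (Term × Term) × Term) × ℕ) u => reach x.1.1 u x.2)
    (primrec_reducts.comp (Primrec.fst.comp .fst) (Primrec.snd.comp .fst))
    (primrec_reach.comp (.pair (Primrec.fst.comp (Primrec.fst.comp .fst))
      (.pair .snd (Primrec.snd.comp .fst))))

/-- A primitive recursive matrix, existentially quantified over `k` in `sigma01_wcr`. -/
def Witness (x : List (ℕ × ℕ) × List (Term × Term) × Term) (k : ℕ) : Prop :=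
  WFTRS x.1 x.2.1 ∧ WFTerm x.1 x.2.2 ∧ Ground x.2.2 ∧ WCRWithin x.2.1 x.2.2 k

theorem primrecRel_witness : PrimrecRel Witness := by
  have h₁ := Primrec.fst.comp (Primrec.fst
    (α := List (ℕ × ℕ) × List (Term × Term) × Term) (β := ℕ))
  have h₂ := Primrec.snd.comp (Primrec.fst
    (α := List (ℕ × ℕ) × List (Term × Term) × Term) (β := ℕ))
  exact .and (primrecPred_wfTRS.comp (.pair h₁ (Primrec.fst.comp h₂))) <|
    .and (primrecPred_wfTerm h₁ (Primrec.snd.comp h₂)) <|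
    .and (primrecPred_ground.comp (Primrec.snd.comp h₂)) <|
    primrecPred_wcrWithin.comp (.pair h₂ .snd)

/-- The set of codes of triples whose rewriting system is weakly confluent on the ground term. -/
def wcrCodes : Set ℕ :=
  { n : ℕ | ∃ (sig : List (ℕ × ℕ)) (R : List (Term × Term)) (t : Term),
      WFTRS sig R ∧ WFTerm sig t ∧ Ground t ∧
      n = Nat.pair (encodeSig sig) (Nat.pair (encodeTRS R) t.encode) ∧ WCRon R t }

theorem mem_wcrCodes {sg : List (ℕ × ℕ)} {R : List (Term × Term)} {t : Term} :
    Encodable.encode (sg, R, t) ∈ wcrCodes ↔ WFTRS sg R ∧ WFTerm sg t ∧ Ground t ∧ WCRon R t := by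
  constructor
  · rintro ⟨sg', R', t', h₁, h₂, h₃, h, h₄⟩
    rw [encode_code, Encodable.encode_inj] at h
    cases h
    exact ⟨h₁, h₂, h₃, h₄⟩
  · rintro ⟨h₁, h₂, h₃, h₄⟩
    exact ⟨sg, R, t, h₁, h₂, h₃, (encode_code ..).symm, h₄⟩

theorem rfind_dom_coe (p : ℕ → Bool) : (Nat.rfind (p : ℕ →. Bool)).Dom ↔ ∃ k, p k = true :=
  Nat.rfind_dom.trans (exists_congr fun _ => ⟨fun h => (Part.mem_some_iff.1 h.1).symm,
    fun h => ⟨Part.mem_some_iff.2 h.symm, fun _ => trivial⟩⟩)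

theorem sigma01_wcr : Sigma01 wcrCodes := by
  classical
  let q : ℕ → ℕ → Bool := fun n k => decide (Witness (Denumerable.ofNat _ n) k)
  refine ⟨fun n => Nat.rfind (q n : ℕ →. Bool), Partrec.nat_iff.1 ?_, fun n => ?_⟩
  · refine Partrec.rfind (Computable₂.partrec₂ (Primrec.to_comp ?_))
    exact (primrecRel_witness.comp ((Primrec.ofNat _).comp .fst) .snd).decide
  · obtain ⟨⟨sg, R, t⟩, rfl⟩ :
        ∃ x : List (ℕ × ℕ) × List (Term × Term) × Term, Encodable.encode x = n :=
      ⟨_, Denumerable.encode_ofNat n⟩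
    have hdom : (Nat.rfind (q (Encodable.encode (sg, R, t)) : ℕ →. Bool)).Dom ↔
        ∃ k, Witness (sg, R, t) k := by
      rw [rfind_dom_coe]
      simp [q]
    rw [mem_wcrCodes, hdom]
    simp only [Witness, exists_and_left]
    exact and_congr_right fun h => and_congr_right fun _ => and_congr_right fun _ =>
      wcrOn_iff fun p hp => (h.2 p hp).2.2.2

/-! ### Every recursively enumerable set reduces to it -/

namespace Interp

theorem primrec_encN : Primrec encN := by
  refine (Primrec.nat_rec₁ (f := fun _ t => nS t) nZ ?_).of_eq fun n => ?_
  · exact primrec_app.comp (.const 17) (Primrec.list_cons.comp .snd (.const []))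
  · induction n with
    | zero => rfl
    | succ n ih => simp only [encN, ← ih]

theorem primrec_start (c : Turing.ToPartrec.Code) : Primrec (start c) := by
  refine primrec_app.comp (.const 2) (Primrec.list_cons.comp (.const _)
    (Primrec.list_cons.comp (.const _) (Primrec.list_cons.comp ?_ (.const []))))
  exact primrec_app.comp (.const 19) (Primrec.list_cons.comp primrec_encN (.const _))

theorem primrec_R : Primrec R :=
  Primrec.list_cons.comp (.const _)
    (Primrec.list_cons.comp (.pair (.const _) .id) (.const _))

/-- Partial recursive functions have the same domain as codes run on one-element lists. -/
theorem exists_code {f : ℕ →. ℕ} (hf : Nat.Partrec f) :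
    ∃ c : Turing.ToPartrec.Code, ∀ n, (c.eval [n]).Dom ↔ (f n).Dom := by
  obtain ⟨c, hc⟩ := Turing.ToPartrec.Code.exists_code
    (Nat.Partrec'.part_iff₁.2 (Partrec.nat_iff.2 hf))
  refine ⟨c, fun n => ?_⟩
  have : c.eval [n] = pure <$> f n := hc (n ::ᵥ .nil)
  rw [this]
  rfl

/-- If `c` computes a function with domain `B`, then `n ∈ B` iff `R (start c n)` is weakly confluent
on `go`. -/
theorem manyOneRed_wcr {B : Set ℕ} (hB : Sigma01 B) : ManyOneRed B wcrCodes := by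
  obtain ⟨f, hf, hB⟩ := hB
  obtain ⟨c, hc⟩ := exists_code hf
  refine ⟨fun n => Encodable.encode (sig, R (start c n), tGo), Primrec.to_comp ?_, fun n => ?_⟩
  · exact Primrec.encode.comp (.pair (.const _) (.pair (primrec_R.comp (primrec_start c)) (.const _)))
  · obtain ⟨h₁, h₂⟩ := ground_start c n
    rw [mem_wcrCodes, hB, ← hc, ← reduces_a_iff, wcr_iff h₁]
    have : WFTerm sig tGo ∧ Ground tGo := by simp [tGo, sig, Ground]
    simp [wf_R h₁ h₂, this]

end Interp

/-- Weak confluence of a finite TRS on a single ground term is Σ⁰₁-complete. -/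
theorem wcr_single_ground_term_Sigma01Complete :
    Sigma01Complete { n : ℕ | ∃ (sig : List (ℕ × ℕ)) (R : List (Term × Term)) (t : Term),
      WFTRS sig R ∧ WFTerm sig t ∧ Ground t ∧ n = Nat.pair (encodeSig sig) (Nat.pair (encodeTRS R) t.encode) ∧
      WCRon R t } :=
  ⟨sigma01_wcr, fun _ hB => Interp.manyOneRed_wcr hB⟩
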